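/- arXiv:2604.21140 — 2 statements merged into one kernel-verified Lean document; each statement's English description precedes it below -/
import Mathlib

section
/- Let S be a string of length n over Σ ∪ {φ} and let 1 ≤ i ≤ n. Then (i) S[1..i] ≈ rev(S)[n−i+1..n] if and only if the prefix S[1..i] is a palindrome, and (ii) S[i..n] ≈ rev(S)[1..n−i+1] if and only if the suffix S[i..n] is a palindrome. (These two alignments are exactly the entries M[i] and M[n+i−1] of the self-matching-convolution M = mconv(S, rev(S)), so M[i] = 1 iff S has a palindromic prefix of length i and M[n+i−1] = 1 iff S has a palindromic suffix starting at position i.) -/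
/-- Characters over `Σ ∪ {φ}`: `none` is the wildcard `φ`, `some a` is a solid letter. -/
def cmatch {α : Type*} (a b : Option α) : Prop := a = b ∨ a = none ∨ b = none

instance {α : Type*} [DecidableEq α] (a b : Option α) : Decidable (cmatch a b) := by
  unfold cmatch; infer_instance

/-- Two equal-length strings match iff they match pointwise. -/
def smatch {α : Type*} (s t : List (Option α)) : Prop := List.Forall₂ cmatch s t

/-- A wildcard string is a palindrome iff it matches its reverse. -/
def IsWPal {α : Type*} (s : List (Option α)) : Prop := smatch s s.reverse

/-- 1-based inclusive factor `S[i..j]`. -/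
def factor {β : Type*} (S : List β) (i j : ℕ) : List β := (S.drop (i - 1)).take (j - i + 1)

/-- 1-based character access (indices are kept in bounds by hypotheses). -/
def chA {α : Type*} (S : List (Option α)) (i : ℕ) : Option α := S.getD (i - 1) none

theorem factor_reverse {β : Type*} (S : List β) {i j : ℕ} (hi : 1 ≤ i) (hij : i ≤ j)
    (hj : j ≤ S.length) :
    factor S.reverse i j = (factor S (S.length + 1 - j) (S.length + 1 - i)).reverse := by
  have length_take : (S.take (S.length - (i - 1))).length = S.length - (i - 1) :=
    List.length_take_of_le (Nat.sub_le _ _)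
  have start_eq : S.length - (i - 1) - (j - i + 1) = S.length + 1 - j - 1 := by omega
  have length_eq : S.length - (i - 1) - (S.length + 1 - j - 1) =
      S.length + 1 - i - (S.length + 1 - j) + 1 := by omega
  rw [factor, factor, List.drop_reverse, List.take_reverse, length_take, start_eq,
    List.drop_take, length_eq]

/-- the prefix `S[1..i]` matches `rev(S)[n−i+1..n]` iff that prefix is a
palindrome, and the suffix `S[i..n]` matches `rev(S)[1..n−i+1]` iff that suffix is a
palindrome (these are the self-matching-convolution entries `M[i]` and `M[n+i−1]`). -/
theorem stmt2 {α : Type*} (S : List (Option α)) (n i : ℕ)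
    (hlen : S.length = n) (hi1 : 1 ≤ i) (hin : i ≤ n) :
    (smatch (factor S 1 i) (factor S.reverse (n - i + 1) n) ↔ IsWPal (factor S 1 i)) ∧
    (smatch (factor S i n) (factor S.reverse 1 (n - i + 1)) ↔ IsWPal (factor S i n)) := by
  subst hlen
  have reverse_prefix :
      factor S.reverse (S.length - i + 1) S.length = (factor S 1 i).reverse := by
    rw [factor_reverse S (by omega) (by omega) le_rfl]
    congr 2 <;> omega
  have reverse_suffix :
      factor S.reverse 1 (S.length - i + 1) = (factor S i S.length).reverse := by
    rw [factor_reverse S le_rfl (by omega) (by omega)]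
    congr 2; omega
  rw [reverse_prefix, reverse_suffix]
  exact ⟨Iff.rfl, Iff.rfl⟩
end

section
/- Let S be a string of length n over Σ ∪ {φ}, and let u ≥ 1 be an integer. Let M = {min(i·u, n) : 1 ≤ i ≤ ⌈n/u⌉} be the set of anchors, and for each integer center 1 ≤ c ≤ n define the detected radius D(c) as the maximum of {0} ∪ {m − c : m ∈ M, c ≤ m, 2c − m ≥ 1, and S[2c−m..m] is a palindrome} ∪ {c − 1 : 2c − 1 ≤ n and S[1..2c−1] is a palindrome}. Then for every center c, the inequality r_c − u < D(c) ≤ r_c holds; that is, the radii detected from palindromic prefixes and suffixes of the prefixes S[1..min(iu, n)] underestimate each maximal radius by strictly less than u. -/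
/-- The maximal radius `r_c` of a subpalindrome centered at `c`
(`c − r ≥ 1` is expressed as `r < c`). -/
noncomputable def maxRad {α : Type*} (S : List (Option α)) (c : ℕ) : ℕ :=
  sSup {r | r < c ∧ c + r ≤ S.length ∧ IsWPal (factor S (c - r) (c + r))}
/-- The radius `D(c)` detected at center `c` from palindromic suffixes of the anchored
prefixes `S[1..min(i·u, n)]` (for anchors `m = min(i·u, n)`, `1 ≤ i ≤ ⌈n/u⌉`), together
with the palindromic-prefix case `S[1..2c−1]`. The condition `2c − m ≥ 1` is expressed
as `m + 1 ≤ 2c`, and `⌈n/u⌉` as `(n + u − 1)/u`. -/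
noncomputable def detRad {α : Type*} (S : List (Option α)) (u c : ℕ) : ℕ :=
  sSup (({0} : Set ℕ) ∪
    {d | ∃ m, (∃ i, 1 ≤ i ∧ i ≤ (S.length + u - 1) / u ∧ m = min (i * u) S.length) ∧
          c ≤ m ∧ m + 1 ≤ 2 * c ∧ IsWPal (factor S (2 * c - m) m) ∧ d = m - c} ∪
    {d | 2 * c - 1 ≤ S.length ∧ IsWPal (factor S 1 (2 * c - 1)) ∧ d = c - 1})

/-! A palindrome stays a palindrome when equally many characters are cut from both ends, so the
radii of palindromes around a fixed center are closed downwards. If `u ≤ r_c`, the largest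
multiple `m` of `u` with `m ≤ c + r_c` is an anchor, and `c ≤ c + r_c - u < m`. Shrinking the
maximal palindrome until it ends at `m` therefore detects the radius `m - c > r_c - u`. -/

section Palindromes

variable {α : Type*}

theorem isWPal_of_palindrome {s : List (Option α)} (hs : s.Palindrome) : IsWPal s := by
  rw [IsWPal, hs.reverse_eq]
  exact List.forall₂_same.2 fun _ _ => Or.inl rfl

theorem IsWPal.trim {s : List (Option α)} (hs : IsWPal s) {k : ℕ} (hk : 2 * k ≤ s.length) :
    IsWPal ((s.drop k).take (s.length - 2 * k)) := by
  have reverse_trim : ((s.drop k).take (s.length - 2 * k)).reverse =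
      (s.reverse.drop k).take (s.length - 2 * k) := by
    rw [List.reverse_take, List.reverse_drop, List.length_drop, List.drop_take,
      show s.length - k - (s.length - 2 * k) = k by omega,
      show s.length - k - k = s.length - 2 * k by omega]
  rw [IsWPal, reverse_trim]
  exact List.forall₂_take _ (List.forall₂_drop _ hs)

theorem length_factor {β : Type*} {S : List β} {i j : ℕ} (hi : 1 ≤ i) (hij : i ≤ j)
    (hj : j ≤ S.length) : (factor S i j).length = j - i + 1 := by
  rw [factor, List.length_take, List.length_drop]
  omega

theorem factor_add_sub_eq_take_drop {β : Type*} (S : List β) {i j k : ℕ} (hi : 1 ≤ i)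
    (hk : i + 2 * k ≤ j) :
    factor S (i + k) (j - k) = ((factor S i j).drop k).take (j - i + 1 - 2 * k) := by
  rw [factor, factor, List.drop_take, List.drop_drop, List.take_take]
  congr 2 <;> omega

theorem IsWPal.factor_add_sub {S : List (Option α)} {i j k : ℕ} (h : IsWPal (factor S i j))
    (hi : 1 ≤ i) (hj : j ≤ S.length) (hk : i + 2 * k ≤ j) :
    IsWPal (factor S (i + k) (j - k)) := by
  have hlen : (factor S i j).length = j - i + 1 := length_factor hi (by omega) hj
  rw [factor_add_sub_eq_take_drop S hi hk, ← hlen]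
  exact h.trim (by omega)

theorem isWPal_factor_self (S : List (Option α)) (c : ℕ) : IsWPal (factor S c c) := by
  apply isWPal_of_palindrome
  rw [factor, Nat.sub_self]
  cases S.drop (c - 1) with
  | nil => exact .nil
  | cons a _ => exact .singleton a

end Palindromes

section Radii

variable {α : Type*} {S : List (Option α)} {u c m : ℕ}

/-- The radii of all palindromic factors of `S` centered at `c`, so that `maxRad S c` is their
supremum; `r < c` says that the factor starts at a position `≥ 1`. -/
def palRadii (S : List (Option α)) (c : ℕ) : Set ℕ :=
  {r | r < c ∧ c + r ≤ S.length ∧ IsWPal (factor S (c - r) (c + r))}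

/-- The set `M` of anchors `min (i * u) n`, `1 ≤ i ≤ ⌈n / u⌉`, for strings of length `n` cut into
blocks of length `u`. -/
def anchors (n u : ℕ) : Set ℕ :=
  {m | ∃ i, 1 ≤ i ∧ i ≤ (n + u - 1) / u ∧ m = min (i * u) n}

/-- The radii detected at center `c`, so that `detRad S u c` is their supremum: `0`, those of
palindromes ending at an anchor, and that of a palindromic prefix. -/
def detectedRadii (S : List (Option α)) (u c : ℕ) : Set ℕ :=
  {0} ∪
    {d | ∃ m, m ∈ anchors S.length u ∧
          c ≤ m ∧ m + 1 ≤ 2 * c ∧ IsWPal (factor S (2 * c - m) m) ∧ d = m - c} ∪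
    {d | 2 * c - 1 ≤ S.length ∧ IsWPal (factor S 1 (2 * c - 1)) ∧ d = c - 1}

theorem bddAbove_palRadii (S : List (Option α)) (c : ℕ) : BddAbove (palRadii S c) :=
  ⟨c, fun _ hr => hr.1.le⟩

theorem zero_mem_palRadii (hc : 1 ≤ c) (hcS : c ≤ S.length) : 0 ∈ palRadii S c :=
  ⟨hc, hcS, isWPal_factor_self S c⟩

theorem isLowerSet_palRadii (S : List (Option α)) (c : ℕ) : IsLowerSet (palRadii S c) := by
  rintro r d hdr ⟨hrc, hrS, hpal⟩
  refine ⟨by omega, by omega, ?_⟩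
  have htrim := hpal.factor_add_sub (k := r - d) (by omega) hrS (by omega)
  rwa [show c - r + (r - d) = c - d by omega, show c + r - (r - d) = c + d by omega] at htrim

theorem maxRad_mem_palRadii (hc : 1 ≤ c) (hcS : c ≤ S.length) : maxRad S c ∈ palRadii S c :=
  Nat.sSup_mem ⟨0, zero_mem_palRadii hc hcS⟩ (bddAbove_palRadii S c)

theorem sub_mem_palRadii_iff (hcm : c ≤ m) (hmc : m + 1 ≤ 2 * c) :
    m - c ∈ palRadii S c ↔ m ≤ S.length ∧ IsWPal (factor S (2 * c - m) m) := by
  have hradius : m - c < c := by omega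
  rw [palRadii, Set.mem_ofPred_eq, Nat.add_sub_of_le hcm,
    show c - (m - c) = 2 * c - m by omega, and_iff_right hradius]

theorem le_of_mem_anchors {n : ℕ} (hm : m ∈ anchors n u) : m ≤ n := by
  obtain ⟨i, -, -, rfl⟩ := hm
  exact min_le_right _ _

theorem exists_mem_anchors_lt_add {n x : ℕ} (hu : 1 ≤ u) (hux : u ≤ x) (hxn : x ≤ n) :
    ∃ m ∈ anchors n u, m ≤ x ∧ x < m + u := by
  have hle : x / u * u ≤ x := Nat.div_mul_le_self x u
  refine ⟨x / u * u, ⟨x / u, Nat.div_pos hux hu, Nat.div_le_div_right (by omega), ?_⟩, hle,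
    Nat.lt_div_mul_add hu⟩
  exact (min_eq_left (hle.trans hxn)).symm

theorem detectedRadii_subset_palRadii (hc : 1 ≤ c) (hcS : c ≤ S.length) :
    detectedRadii S u c ⊆ palRadii S c := by
  rintro d ((rfl | ⟨m, hanchor, hcm, hmc, hpal, rfl⟩) | ⟨hlen, hpal, rfl⟩)
  · exact zero_mem_palRadii hc hcS
  · exact (sub_mem_palRadii_iff hcm hmc).2 ⟨le_of_mem_anchors hanchor, hpal⟩
  · have hprefix_radius : 2 * c - 1 - c ∈ palRadii S c := by
      rw [sub_mem_palRadii_iff (by omega) (by omega), show 2 * c - (2 * c - 1) = 1 by omega]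
      exact ⟨hlen, hpal⟩
    rwa [show 2 * c - 1 - c = c - 1 by omega] at hprefix_radius

theorem sub_mem_detectedRadii (hanchor : m ∈ anchors S.length u) (hcm : c ≤ m)
    (hrad : m - c ∈ palRadii S c) : m - c ∈ detectedRadii S u c := by
  have hmc : m + 1 ≤ 2 * c := by
    have := hrad.1
    omega
  exact .inl (.inr ⟨m, hanchor, hcm, hmc, ((sub_mem_palRadii_iff hcm hmc).1 hrad).2, rfl⟩)

theorem detRad_le_maxRad (hc : 1 ≤ c) (hcS : c ≤ S.length) : detRad S u c ≤ maxRad S c :=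
  csSup_le_csSup (bddAbove_palRadii S c) ⟨0, .inl (.inl rfl)⟩
    (detectedRadii_subset_palRadii hc hcS)

theorem le_detRad {d : ℕ} (hc : 1 ≤ c) (hcS : c ≤ S.length) (hd : d ∈ detectedRadii S u c) :
    d ≤ detRad S u c :=
  le_csSup ((bddAbove_palRadii S c).mono (detectedRadii_subset_palRadii hc hcS)) hd

theorem maxRad_lt_detRad_add (hu : 1 ≤ u) (hc : 1 ≤ c) (hcS : c ≤ S.length) :
    maxRad S c < detRad S u c + u := by
  rcases lt_or_ge (maxRad S c) u with hlt | hle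
  · exact hlt.trans_le (Nat.le_add_left _ _)
  have hmax : maxRad S c ∈ palRadii S c := maxRad_mem_palRadii hc hcS
  obtain ⟨m, hanchor, hm_le, hlt_m⟩ :=
    exists_mem_anchors_lt_add hu (Nat.le_add_left_of_le hle) hmax.2.1
  have hcm : c ≤ m := by omega
  have hrad : m - c ∈ palRadii S c := isLowerSet_palRadii S c (by omega) hmax
  have hdetected : m - c ≤ detRad S u c :=
    le_detRad hc hcS (sub_mem_detectedRadii hanchor hcm hrad)
  omega

end Radii

/-- with block size `u ≥ 1`, the radii detected from palindromic prefixes and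
suffixes of the prefixes `S[1..min(iu, n)]` satisfy `r_c − u < D(c) ≤ r_c` for every center
(the strict inequality is written additively as `r_c < D(c) + u`). -/
theorem stmt9 {α : Type*} (S : List (Option α)) (n u : ℕ)
    (hlen : S.length = n) (hu : 1 ≤ u) (c : ℕ) (hc1 : 1 ≤ c) (hcn : c ≤ n) :
    maxRad S c < detRad S u c + u ∧ detRad S u c ≤ maxRad S c := by
  subst hlen
  exact ⟨maxRad_lt_detRad_add hu hc1 hcn, detRad_le_maxRad hc1 hcn⟩
end
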